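/- (Lemma 4.1, fractional derivative of a quadratic form.) Let β ∈ (0,1), let x : [0,∞) → ℝⁿ be continuously differentiable, and let P be a real symmetric positive definite n×n matrix. Then for all t ≥ 0: (1/2)·(D^β (s ↦ x(s)ᵀ P x(s)))(t) ≤ x(t)ᵀ P (D^β x)(t), where the Caputo derivative of the vector-valued function x is taken componentwise. -/

import Mathlib

open MeasureTheory intervalIntegral Matrix

/-- Caputo fractional derivative of order `β` of a real-valued function `g`. -/
noncomputable def caputo (β : ℝ) (g : ℝ → ℝ) (t : ℝ) : ℝ :=
  (1 / Real.Gamma (1 - β)) * ∫ s in (0:ℝ)..t, (t - s) ^ (-β) * deriv g s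

/-- Componentwise Caputo fractional derivative of a vector-valued function. -/
noncomputable def caputoVec {n : ℕ} (β : ℝ) (x : ℝ → Fin n → ℝ) (t : ℝ) : Fin n → ℝ :=
  fun i => caputo β (fun s => x s i) t

lemma caputo_integrable (β : ℝ) (hβ : β ∈ Set.Ioo (0:ℝ) 1) (g : ℝ → ℝ) (hg : ContDiff ℝ 1 g) (t : ℝ) :
    IntervalIntegrable (fun s => (t - s) ^ (-β) * deriv g s) volume 0 t := by
  have h1 : IntervalIntegrable (fun s : ℝ => s ^ (-β)) volume 0 t :=
    intervalIntegral.intervalIntegrable_rpow' (by linarith [hβ.2])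
  have h2 := (h1.comp_sub_left t).symm
  simp only [sub_self, sub_zero] at h2
  exact h2.mul_continuousOn (hg.continuous_deriv le_rfl).continuousOn

lemma caputo_nonpos (β : ℝ) (hβ : β ∈ Set.Ioo (0:ℝ) 1) (V : ℝ → ℝ) (hV : ContDiff ℝ 1 V) (t : ℝ)
    (ht : 0 ≤ t) (h0 : ∀ s, 0 ≤ V s) (hVt : V t = 0) : caputo β V t ≤ 0 := by
  have hd : Differentiable ℝ V := hV.differentiable one_ne_zero
  have key : ∀ s ≤ t, (t - s) ^ (-β) * V s = -((t - s) ^ (1 - β) * dslope V t s) := by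
    intro s hs
    rcases hs.eq_or_lt with rfl | hs
    · have : (1 - β) ≠ 0 := by linarith [hβ.2]
      simp [hVt, Real.zero_rpow this]
    · have hp : 0 < t - s := by linarith
      have e : (t - s) ^ (1 - β) = (t - s) ^ (-β) * (t - s) := by
        rw [show 1 - β = -β + 1 by ring, Real.rpow_add_one hp.ne']
      have e2 := sub_smul_dslope V t s
      rw [hVt, smul_eq_mul, sub_zero] at e2
      rw [e, ← e2]; ring
  have hc : ContinuousOn (fun s => (t - s) ^ (-β) * V s) (Set.Icc 0 t) := by
    have : ContinuousOn (fun s => -((t - s) ^ (1 - β) * dslope V t s)) (Set.Icc 0 t) := by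
      have c1 : Continuous (fun s : ℝ => (t - s) ^ (1 - β)) :=
        (continuous_const.sub continuous_id).rpow_const (fun _ => Or.inr (by linarith [hβ.2]))
      have c2 : ContinuousOn (dslope V t) Set.univ :=
        (continuousOn_dslope Filter.univ_mem).2 ⟨hV.continuous.continuousOn, hd t⟩
      exact (c1.continuousOn.mul (c2.mono (Set.subset_univ _))).neg
    exact this.congr (fun s hs => key s hs.2)
  have hI := caputo_integrable β hβ V hV t
  have main := intervalIntegral.integral_le_sub_of_hasDeriv_right_of_le ht hc
    (g' := fun s => (-1) * (-β) * (t - s) ^ (-β - 1) * V s + (t - s) ^ (-β) * deriv V s)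
    (φ := fun s => (t - s) ^ (-β) * deriv V s)
    (fun s hs => by
      have hp : 0 < t - s := by linarith [hs.2]
      have a : HasDerivAt (fun s : ℝ => t - s) (-1) s := by
        simpa using (hasDerivAt_id s).const_sub t
      exact ((a.rpow_const (p := -β) (Or.inl hp.ne')).mul (hd s).hasDerivAt).hasDerivWithinAt)
    ((intervalIntegrable_iff_integrableOn_Icc_of_le ht).1 hI)
    (fun s hs => by
      have hp : 0 < t - s := by linarith [hs.2]
      have := mul_nonneg (mul_nonneg hβ.1.le (Real.rpow_nonneg hp.le (-β - 1))) (h0 s)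
      linarith)
  simp only [hVt, mul_zero, sub_zero, zero_sub] at main
  have h3 := mul_nonneg (Real.rpow_nonneg ht (-β)) (h0 0)
  have hG : 0 < Real.Gamma (1 - β) := Real.Gamma_pos_of_pos (by linarith [hβ.2])
  unfold caputo
  exact mul_nonpos_of_nonneg_of_nonpos (by positivity) (by linarith)

lemma caputo_combo {n : ℕ} (β : ℝ) (hβ : β ∈ Set.Ioo (0:ℝ) 1) (q : ℝ → ℝ) (hq : ContDiff ℝ 1 q)
    (x : ℝ → Fin n → ℝ) (hx : ContDiff ℝ 1 x) (c : Fin n → ℝ) (d t : ℝ) :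
    caputo β (fun s => (1 / 2) * q s - ∑ j, c j * x s j + d) t =
      (1 / 2) * caputo β q t - ∑ j, c j * caputo β (fun s => x s j) t := by
  have hxj : ∀ j, ContDiff ℝ 1 (fun s => x s j) := fun j => contDiff_pi.1 hx j
  have hD : ∀ s, deriv (fun s => (1 / 2) * q s - ∑ j, c j * x s j + d) s =
      (1 / 2) * deriv q s - ∑ j, c j * deriv (fun s => x s j) s := by
    intro s
    have a := ((hq.differentiable one_ne_zero) s).hasDerivAt.const_mul (1 / 2 : ℝ)
    have b : HasDerivAt (fun s => ∑ j, c j * x s j) (∑ j, c j * deriv (fun s => x s j) s) s :=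
      HasDerivAt.fun_sum (fun j _ =>
        (((hxj j).differentiable one_ne_zero) s).hasDerivAt.const_mul (c j))
    exact ((a.sub b).add_const d).deriv
  unfold caputo
  simp only [hD]
  have e : ∀ s, (t - s) ^ (-β) * ((1 / 2) * deriv q s - ∑ j, c j * deriv (fun s => x s j) s) =
      (1 / 2) * ((t - s) ^ (-β) * deriv q s) -
        ∑ j, c j * ((t - s) ^ (-β) * deriv (fun s => x s j) s) := by
    intro s
    rw [mul_sub, Finset.mul_sum]
    congr 1
    · ring
    · exact Finset.sum_congr rfl fun j _ => by ring
  have hi : ∀ j ∈ Finset.univ, IntervalIntegrable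
      (fun s => c j * ((t - s) ^ (-β) * deriv (fun s => x s j) s)) volume 0 t :=
    fun j _ => (caputo_integrable β hβ _ (hxj j) t).const_mul (c j)
  have his : IntervalIntegrable
      (fun s => ∑ j, c j * ((t - s) ^ (-β) * deriv (fun s => x s j) s)) volume 0 t := by
    have := IntervalIntegrable.sum Finset.univ hi
    have e3 : (∑ j, fun s => c j * ((t - s) ^ (-β) * deriv (fun s => x s j) s)) =
        (fun s => ∑ j, c j * ((t - s) ^ (-β) * deriv (fun s => x s j) s)) := by
      funext s
      simp
    rw [← e3]
    exact this
  simp only [e]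
  rw [intervalIntegral.integral_sub ((caputo_integrable β hβ q hq t).const_mul _) his,
    intervalIntegral.integral_finsetSum hi, mul_sub, Finset.mul_sum]
  simp only [intervalIntegral.integral_const_mul]
  congr 1
  · ring
  · exact Finset.sum_congr rfl fun j _ => by ring

/-- Lemma 4.1: fractional derivative of a quadratic form,
`(1/2)·D^β(xᵀPx)(t) ≤ x(t)ᵀ P (D^β x)(t)` for symmetric positive definite `P`. -/
theorem stmt_8 {n : ℕ} (β : ℝ) (hβ : β ∈ Set.Ioo (0:ℝ) 1)
    (x : ℝ → Fin n → ℝ) (hx : ContDiff ℝ 1 x)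
    (P : Matrix (Fin n) (Fin n) ℝ) (hP : P.PosDef) :
    ∀ t ≥ (0:ℝ),
      (1 / 2) * caputo β (fun s => x s ⬝ᵥ P.mulVec (x s)) t ≤
        x t ⬝ᵥ P.mulVec (caputoVec β x t) := by
  intro t ht
  have hxj : ∀ j, ContDiff ℝ 1 (fun s => x s j) := fun j => contDiff_pi.1 hx j
  have hq : ContDiff ℝ 1 (fun s => x s ⬝ᵥ P.mulVec (x s)) := by
    simp only [dotProduct, Matrix.mulVec]
    exact ContDiff.sum fun i _ => (hxj i).mul
      (ContDiff.sum fun j _ => contDiff_const.mul (hxj j))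
  have hsymm : ∀ u v : Fin n → ℝ, u ⬝ᵥ P.mulVec v = v ⬝ᵥ P.mulVec u := by
    intro u v
    have hT : Pᵀ = P := by simpa [Matrix.conjTranspose_eq_transpose_of_trivial] using hP.1.eq
    rw [Matrix.dotProduct_mulVec, ← Matrix.mulVec_transpose, hT, dotProduct_comm]
  have hc : ∀ v : Fin n → ℝ, x t ⬝ᵥ P.mulVec v = ∑ j, (x t ᵥ* P) j * v j := by
    intro v
    rw [Matrix.dotProduct_mulVec]; rfl
  have hS : ContDiff ℝ 1 (fun s => ∑ j, (x t ᵥ* P) j * x s j) :=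
    ContDiff.sum fun j _ => contDiff_const.mul (hxj j)
  have hcomb := caputo_combo β hβ _ hq x hx (x t ᵥ* P) ((1 / 2) * (x t ⬝ᵥ P.mulVec (x t))) t
  have hneg := caputo_nonpos β hβ (fun s => (1 / 2) * (x s ⬝ᵥ P.mulVec (x s)) -
      ∑ j, (x t ᵥ* P) j * x s j + (1 / 2) * (x t ⬝ᵥ P.mulVec (x t)))
    (((contDiff_const.mul hq).sub hS).add contDiff_const) t ht
    (fun s => by
      have h := hP.posSemidef.dotProduct_mulVec_nonneg (x s - x t)
      simp only [star_trivial, Matrix.mulVec_sub, dotProduct_sub, sub_dotProduct] at h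
      rw [hsymm (x s) (x t)] at h
      rw [← hc]
      linarith)
    (by rw [← hc]; ring)
  rw [hcomb] at hneg
  rw [hc]
  simp only [caputoVec]
  linarith
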